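/- Let m ≥ 2k-1. Then every polynomial P ∈ 𝒫 has a unique representation P = Σ_n r^{2n} H_n, where the sum is over all families n = (n_ij)_{1 ≤ i ≤ j ≤ k} of nonnegative integers, only finitely many H_n are nonzero, and every H_n is a spherical harmonic. Equivalently, 𝒫 = ⊕_n r^{2n} ℋ (Theorem A, the harmonic Fischer decomposition in the semistable range). -/

import Mathlib

/-!
For the Fischer inner product, multiplication by `r²_ij` is adjoint to `Δ_ij`, so the spherical
harmonics are the orthogonal complement of the ideal `I` generated by the `r²_ij`, and induction on
the degree gives the existence of the expansion.

If `∑ n, r^{2n} H_n = 0`, uniqueness follows as soon as the coefficients `H_n` of lowest degree lie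
in `I`, because they are also orthogonal to `I`. This holds for `m ≥ 2k - 1`: with `α² + β² = 0` and
`2αβ = 1`, the substitution `x^i_s ↦ α x^i_s + β x^i_{ρ s}`, where `ρ` reflects the first `2k - 1`
indices, turns `r²_ij` into `∑ s, x^i_s x^j_{ρ s}`, and a suitable weight singles out its term with
`s = k - 1 + (j - i)` (indices from `0`). No variable occurs in two of these leading terms, so the
polynomial ring is free over the subalgebra generated by the `r²_ij`.
-/

open MvPolynomial

/-- The mixed Laplacian `Δ_ij = Σ_s ∂_{x^i_s} ∂_{x^j_s}` on polynomials in `k` vector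
variables of `ℝ^m`. -/
noncomputable def mixedLap (k m : ℕ) (i j : Fin k)
    (P : MvPolynomial (Fin k × Fin m) ℂ) : MvPolynomial (Fin k × Fin m) ℂ :=
  ∑ s : Fin m, pderiv (i, s) (pderiv (j, s) P)

/-- The polynomial `r²_ij = Σ_s x^i_s x^j_s`. -/
noncomputable def r2 (k m : ℕ) (i j : Fin k) : MvPolynomial (Fin k × Fin m) ℂ :=
  ∑ s : Fin m, X (i, s) * X (j, s)

/-- `H` is a spherical harmonic if `Δ_ij H = 0` for all `i ≤ j`. -/
def IsSphericalHarmonic (k m : ℕ) (H : MvPolynomial (Fin k × Fin m) ℂ) : Prop :=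
  ∀ i j : Fin k, i ≤ j → mixedLap k m i j H = 0

/-- For a family `n = (n_ij)_{i ≤ j}` of nonnegative integers, the polynomial
`r^{2n} = ∏_{i ≤ j} (r²_ij)^{n_ij}`. -/
noncomputable def r2pow (k m : ℕ) (n : {p : Fin k × Fin k // p.1 ≤ p.2} → ℕ) :
    MvPolynomial (Fin k × Fin m) ℂ :=
  ∏ p : {p : Fin k × Fin k // p.1 ≤ p.2}, (r2 k m p.1.1 p.1.2) ^ (n p)

namespace FischerDecomposition

open scoped ComplexConjugate InnerProductSpace

section QuasiRegular

variable {ι A B : Type*} [CommRing A] [CommRing B]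

/-- A family `q` is quasi-regular if in every polynomial relation among its members the
coefficients of lowest degree lie in the ideal it generates. For finite families this is
quasi-regularity in the sense of Matsumura. -/
def IsQuasiRegular (q : ι → B) : Prop :=
  ∀ F : MvPolynomial ι B, eval q F = 0 → ∀ n, (∀ n' ∈ F.support, n.degree ≤ n'.degree) →
    coeff n F ∈ Ideal.span (Set.range q)

lemma IsQuasiRegular.of_map {q : ι → A} (f : A ≃+* B) (h : IsQuasiRegular fun i => f (q i)) :
    IsQuasiRegular q := by
  intro F hF n hn
  have hfF : eval (fun i => f (q i)) (map (f : A →+* B) F) = 0 := by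
    rw [eval_map, ← map_zero f, ← hF]
    exact (eval₂_comp_left (f : A →+* B) (.id A) q F).symm
  have hcoeff := h _ hfF n fun n' hn' => hn n' (support_map_subset _ _ hn')
  rw [coeff_map, ← Function.comp_def, Set.range_comp] at hcoeff
  have := Ideal.mem_map_of_mem f.symm hcoeff
  simpa [Ideal.map_span, Set.image_image, Set.range_comp] using this

lemma constantCoeff_eq_zero_of_sum_monomial_mul_eq_zero {s : Finset (ι →₀ ℕ)}
    {a : (ι →₀ ℕ) → MvPolynomial ι A} (h : ∑ n ∈ s, monomial n 1 * a n = 0) {n : ι →₀ ℕ}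
    (hns : n ∈ s) (hn : ∀ n' ∈ s, n.degree ≤ n'.degree) : constantCoeff (a n) = 0 := by
  classical
  have eq_of_le {n' : ι →₀ ℕ} (hn' : n' ∈ s) (hle : n' ≤ n) : n' = n := by
    obtain ⟨d, rfl⟩ := exists_add_of_le hle
    have hd : d.degree = 0 := by simpa using hn n' hn'
    rw [(Finsupp.degree_eq_zero_iff d).mp hd, add_zero]
  have hcoeff := congrArg (coeff n) h
  rw [coeff_sum, Finset.sum_eq_single_of_mem n hns] at hcoeff
  · simpa [coeff_monomial_mul', constantCoeff_eq] using hcoeff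
  · intro n' hn' hne
    rw [coeff_monomial_mul', if_neg fun hle => hne (eq_of_le hn' hle)]

lemma IsQuasiRegular.of_free [Algebra (MvPolynomial ι A) B] [Module.Free (MvPolynomial ι A) B] :
    IsQuasiRegular fun i : ι => algebraMap (MvPolynomial ι A) B (X i) := by
  intro F hF n hn
  by_cases hnF : n ∈ F.support
  swap
  · rw [notMem_support_iff.mp hnF]
    exact zero_mem _
  let b := Module.Free.chooseBasis (MvPolynomial ι A) B
  have relation : ∑ n ∈ F.support, monomial n (1 : A) • coeff n F = 0 := by
    rw [← hF, eval_eq]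
    refine Finset.sum_congr rfl fun n _ => ?_
    rw [Algebra.smul_def, mul_comm, monomial_eq, C_1, one_mul, Finsupp.prod, map_prod]
    simp only [map_pow]
  have coord_mem (s) : b.repr (coeff n F) s ∈ idealOfVars ι A := by
    have coord_relation : ∑ n ∈ F.support, monomial n 1 * b.repr (coeff n F) s = 0 := by
      simpa using congrArg (fun x => b.repr x s) relation
    have := constantCoeff_eq_zero_of_sum_monomial_mul_eq_zero coord_relation hnF hn
    rw [← pow_one (idealOfVars ι A), mem_pow_idealOfVars_iff']
    intro d hd
    rwa [(Finsupp.degree_eq_zero_iff d).mp (Nat.lt_one_iff.mp hd)]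
  rw [← b.linearCombination_repr (coeff n F), Finsupp.linearCombination_apply]
  refine sum_mem fun s _ => ?_
  have := Ideal.mem_map_of_mem (algebraMap (MvPolynomial ι A) B) (coord_mem s)
  rw [idealOfVars, Ideal.map_span, ← Set.range_comp] at this
  simpa only [Algebra.smul_def] using! Ideal.mul_mem_right (b s) _ this

end QuasiRegular

section LeadingExponents

variable {ι κ τ K : Type*} [Field K] {m : MonomialOrder τ}

lemma linearIndependent_of_injective_degree {u : κ → MvPolynomial τ K} (hu : ∀ k, u k ≠ 0)
    (hinj : Function.Injective fun k => m.degree (u k)) : LinearIndependent K u := by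
  classical
  rw [linearIndependent_iff']
  intro s c hc k hk
  by_contra hck
  obtain ⟨l, hl, hmax⟩ := (s.filter (c · ≠ 0)).exists_max_image (fun k => m.toSyn (m.degree (u k)))
    ⟨k, Finset.mem_filter.mpr ⟨hk, hck⟩⟩
  obtain ⟨hls, hcl⟩ := Finset.mem_filter.mp hl
  have hcoeff := congrArg (coeff (m.degree (u l))) hc
  rw [coeff_sum, Finset.sum_eq_single_of_mem l hls, coeff_smul, coeff_zero, smul_eq_zero] at hcoeff
  · exact hcoeff.elim hcl (m.coeff_degree_ne_zero_iff.mpr (hu l))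
  · intro k hk hkl
    rw [coeff_smul, smul_eq_zero]
    by_contra! hne
    refine hne.2 (m.coeff_eq_zero_of_lt (lt_of_le_of_ne ?_ ?_))
    · exact hmax k (Finset.mem_filter.mpr ⟨hk, hne.1⟩)
    · exact fun h => hkl (hinj (m.toSyn.injective h))

lemma span_eq_top_of_surjective_degree {u : κ → MvPolynomial τ K} (hu : ∀ k, u k ≠ 0)
    (hsurj : Function.Surjective fun k => m.degree (u k)) :
    Submodule.span K (Set.range u) = ⊤ := by
  classical
  have monomial_mem (a : τ →₀ ℕ) : monomial a (1 : K) ∈ Submodule.span K (Set.range u) := by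
    induction a using (InvImage.wf m.toSyn wellFounded_lt).induction with | _ a ih => ?_
    obtain ⟨k, rfl : m.degree (u k) = a⟩ := hsurj a
    have tail_mem : u k - m.leadingTerm (u k) ∈ Submodule.span K (Set.range u) := by
      rw [as_sum (u k - m.leadingTerm (u k))]
      refine sum_mem fun b hb => ?_
      rw [← mul_one (coeff b _), ← smul_eq_mul, ← smul_monomial]
      refine Submodule.smul_mem _ _ (ih b (lt_of_le_of_ne ?_ fun hbk => ?_))
      · exact (m.le_degree hb).trans (m.degree_sub_leadingTerm_le _)
      · rw [m.toSyn.injective hbk] at hb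
        simp [MonomialOrder.leadingTerm, MonomialOrder.leadingCoeff, coeff_monomial] at hb
    have lead_mem : m.leadingTerm (u k) ∈ Submodule.span K (Set.range u) := by
      simpa using sub_mem (Submodule.subset_span (Set.mem_range_self k)) tail_mem
    rw [MonomialOrder.leadingTerm, ← mul_one (m.leadingCoeff (u k)), ← smul_eq_mul,
      ← smul_monomial] at lead_mem
    exact (Submodule.smul_mem_iff _ (m.leadingCoeff_ne_zero_iff.mpr (hu k))).mp lead_mem
  rw [eq_top_iff, ← (basisMonomials τ K).span_eq, Submodule.span_le]
  rintro _ ⟨a, rfl⟩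
  rw [coe_basisMonomials]
  exact monomial_mem a

/-- The exponents of the monomials outside the monomial ideal with generators `x ^ ℓ i`. -/
def standardExponents (ℓ : ι → τ →₀ ℕ) : Set (τ →₀ ℕ) :=
  {a | ∀ i, ¬ ℓ i ≤ a}

lemma linearCombination_apply_of_disjoint {ℓ : ι → τ →₀ ℕ}
    (hℓ : Pairwise fun i j => Disjoint (ℓ i) (ℓ j)) (n : ι →₀ ℕ) {i : ι} {t : τ}
    (ht : ℓ i t ≠ 0) : Finsupp.linearCombination ℕ ℓ n t = n i * ℓ i t := by
  rw [Finsupp.linearCombination_apply, Finsupp.sum_apply, Finsupp.sum, Finset.sum_eq_single i]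
  · simp
  · intro j _ hji
    have hmin : min (ℓ j t) (ℓ i t) = 0 := DFunLike.congr_fun (disjoint_iff.mp (hℓ hji)) t
    have hj : ℓ j t = 0 := by omega
    simp [hj]
  · simp +contextual

lemma smul_le_linearCombination_add_iff {ℓ : ι → τ →₀ ℕ}
    (hℓ : Pairwise fun i j => Disjoint (ℓ i) (ℓ j)) {a : τ →₀ ℕ} (ha : a ∈ standardExponents ℓ)
    (n : ι →₀ ℕ) (i : ι) (c : ℕ) :
    c • ℓ i ≤ Finsupp.linearCombination ℕ ℓ n + a ↔ c ≤ n i := by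
  constructor
  · intro h
    by_contra! hlt
    refine ha i fun t => ?_
    by_cases ht : ℓ i t = 0
    · simp [ht]
    have hct : c * ℓ i t ≤ n i * ℓ i t + a t := by
      simpa [linearCombination_apply_of_disjoint hℓ n ht] using h t
    nlinarith
  · intro h t
    by_cases ht : ℓ i t = 0
    · simp [ht]
    have hct : c * ℓ i t ≤ n i * ℓ i t := Nat.mul_le_mul_right _ h
    simpa [linearCombination_apply_of_disjoint hℓ n ht] using hct.trans (Nat.le_add_right _ _)

lemma bijective_linearCombination_add_standardExponents {ℓ : ι → τ →₀ ℕ} (h0 : ∀ i, ℓ i ≠ 0)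
    (hℓ : Pairwise fun i j => Disjoint (ℓ i) (ℓ j)) :
    Function.Bijective fun p : (ι →₀ ℕ) × standardExponents ℓ =>
      Finsupp.linearCombination ℕ ℓ p.1 + p.2 := by
  constructor
  · rintro ⟨n, a, ha⟩ ⟨n', a', ha'⟩ h
    obtain rfl : n = n' := Finsupp.ext fun i => eq_of_forall_le_iff fun c => by
      rw [← smul_le_linearCombination_add_iff hℓ ha, ← smul_le_linearCombination_add_iff hℓ ha']
      exact iff_of_eq (congrArg _ h)
    obtain rfl : a = a' := add_left_cancel h
    rfl
  · intro a
    induction a using WellFoundedLT.induction with | _ a ih => ?_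
    by_cases ha : a ∈ standardExponents ℓ
    · exact ⟨(0, ⟨a, ha⟩), by simp⟩
    · obtain ⟨i, hi⟩ : ∃ i, ℓ i ≤ a := by simpa [standardExponents] using ha
      obtain ⟨a', rfl⟩ := exists_add_of_le hi
      obtain ⟨⟨n, s⟩, rfl⟩ := ih a' (lt_add_of_pos_left a' (pos_iff_ne_zero.mpr (h0 i)))
      exact ⟨(Finsupp.single i 1 + n, s), by simp [add_assoc]⟩

lemma degree_prod_pow_mul_monomial {g : ι → MvPolynomial τ K} (hg : ∀ i, g i ≠ 0) (n : ι →₀ ℕ)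
    (a : τ →₀ ℕ) : m.degree ((n.prod fun i c => g i ^ c) * monomial a (1 : K)) =
      Finsupp.linearCombination ℕ (fun i => m.degree (g i)) n + a := by
  classical
  have hpow (i : ι) : g i ^ n i ≠ 0 := pow_ne_zero _ (hg i)
  rw [Finsupp.prod, m.degree_mul (Finset.prod_ne_zero_iff.mpr fun i _ => hpow i) (by simp),
    m.degree_prod fun i _ => hpow i, m.degree_monomial, if_neg one_ne_zero]
  simp [m.degree_pow, Finsupp.linearCombination_apply, Finsupp.sum]

lemma free_of_basis_smul {B : Type*} [CommRing B] [Algebra K B] [Algebra (MvPolynomial ι K) B]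
    [IsScalarTower K (MvPolynomial ι K) B] {u : κ → B} (b : Module.Basis ((ι →₀ ℕ) × κ) K B)
    (hb : ∀ n k, b (n, k) = monomial n (1 : K) • u k) : Module.Free (MvPolynomial ι K) B := by
  let φ : (κ →₀ MvPolynomial ι K) →ₗ[MvPolynomial ι K] B :=
    Finsupp.linearCombination (MvPolynomial ι K) u
  let b₀ : Module.Basis (Σ _ : κ, ι →₀ ℕ) K (κ →₀ MvPolynomial ι K) :=
    Finsupp.basis fun _ => basisMonomials ι K
  let e : (κ →₀ MvPolynomial ι K) ≃ₗ[K] B :=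
    b₀.equiv b ((Equiv.sigmaEquivProd κ (ι →₀ ℕ)).trans (Equiv.prodComm _ _))
  have hφ : φ.restrictScalars K = e := b₀.ext fun p => by
    rw [LinearEquiv.coe_coe, Module.Basis.equiv_apply]
    simp [φ, b₀, hb]
  have bijective : Function.Bijective φ := by
    have := e.bijective
    rwa [← LinearEquiv.coe_coe, ← hφ] at this
  exact .of_equiv (LinearEquiv.ofBijective φ bijective)

/-- The products of the `g i` with the standard monomials form a `K`-basis, so the polynomial ring
is free over the subalgebra generated by the `g i`. -/
theorem IsQuasiRegular.of_disjoint_degree {g : ι → MvPolynomial τ K}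
    (hg : ∀ i, m.degree (g i) ≠ 0)
    (hdisj : Pairwise fun i j => Disjoint (m.degree (g i)) (m.degree (g j))) :
    IsQuasiRegular g := by
  have hg0 (i : ι) : g i ≠ 0 := MonomialOrder.ne_zero_of_degree_ne_zero (hg i)
  let u (p : (ι →₀ ℕ) × standardExponents fun i => m.degree (g i)) : MvPolynomial τ K :=
    (p.1.prod fun i c => g i ^ c) * monomial (p.2 : τ →₀ ℕ) 1
  have hu (p) : u p ≠ 0 :=
    mul_ne_zero (Finset.prod_ne_zero_iff.mpr fun i _ => pow_ne_zero _ (hg0 i)) (by simp)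
  have hdeg : Function.Bijective fun p => m.degree (u p) := by
    simpa only [u, degree_prod_pow_mul_monomial hg0] using
      bijective_linearCombination_add_standardExponents hg hdisj
  let : Algebra (MvPolynomial ι K) (MvPolynomial τ K) := (aeval g).toAlgebra
  have : IsScalarTower K (MvPolynomial ι K) (MvPolynomial τ K) :=
    .of_algebraMap_eq fun c => ((aeval g).commutes c).symm
  have : Module.Free (MvPolynomial ι K) (MvPolynomial τ K) :=
    free_of_basis_smul (u := fun a : standardExponents _ => monomial (a : τ →₀ ℕ) 1)
      (.mk (linearIndependent_of_injective_degree hu hdeg.1)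
        (span_eq_top_of_surjective_degree hu hdeg.2).ge)
      fun n a => by
        simp [u, Algebra.smul_def, RingHom.algebraMap_toAlgebra, bind₁_monomial, Finsupp.prod]
  have := IsQuasiRegular.of_free (ι := ι) (A := K) (B := MvPolynomial τ K)
  simpa [RingHom.algebraMap_toAlgebra] using this

end LeadingExponents

section WeightedOrder

/-- The exponent `a`, preceded by its weight: the key that `weightedOrder` compares. -/
noncomputable def weightedKey {τ : Type*} (w : τ → ℕ) (m : MonomialOrder τ) :
    (τ →₀ ℕ) →+ ℕ ×ₗ m.syn where
  toFun a := toLex (Finsupp.weight w a, m.toSyn a)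
  map_zero' := by simp
  map_add' a b := by simp [← toLex_add]

/-- The monomial order that compares exponents first by their weight and then by `m`. -/
noncomputable def weightedOrder {τ : Type*} (w : τ → ℕ) (m : MonomialOrder τ) :
    MonomialOrder τ where
  syn := AddMonoidHom.mrange (weightedKey w m)
  toSyn := AddEquiv.ofLeftInverse' (weightedKey w m) (g := fun x => m.toSyn.symm (ofLex x).2)
    fun a => m.toSyn.symm_apply_apply a
  toSyn_monotone := by
    intro a b h
    obtain ⟨c, rfl⟩ := exists_add_of_le h
    refine Prod.Lex.toLex_mono ⟨?_, m.toSyn_monotone h⟩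
    simp

lemma lt_weightedOrder_of_weight_lt {τ : Type*} {w : τ → ℕ} (m : MonomialOrder τ) {a b : τ →₀ ℕ}
    (h : Finsupp.weight w a < Finsupp.weight w b) :
    (weightedOrder w m).toSyn a < (weightedOrder w m).toSyn b :=
  Prod.Lex.toLex_lt_toLex.mpr (.inl h)

lemma nonempty_monomialOrder.{u} (τ : Type u) [Finite τ] : Nonempty (MonomialOrder.{u, u} τ) := by
  classical
  let := linearOrderOfSTO (WellOrderingRel (α := τ))
  exact ⟨MonomialOrder.lex⟩

lemma degree_sum_monomial_of_weight_lt {τ κ R : Type*} [Fintype κ] [CommSemiring R] [Nontrivial R]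
    {w : τ → ℕ} {m : MonomialOrder τ} {a : κ → τ →₀ ℕ} {s₀ : κ}
    (h : ∀ s ≠ s₀, Finsupp.weight w (a s) < Finsupp.weight w (a s₀)) :
    (weightedOrder w m).degree (∑ s, monomial (a s) (1 : R)) = a s₀ := by
  classical
  refine (weightedOrder w m).toSyn.injective (le_antisymm ?_ ?_)
  · refine (MonomialOrder.degree_le_iff (m := weightedOrder w m)).mpr fun b hb => ?_
    obtain ⟨s, rfl⟩ : ∃ s, a s = b := by
      by_contra! hne
      simp [coeff_sum, coeff_monomial, hne] at hb
    obtain rfl | hs := eq_or_ne s s₀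
    · exact le_rfl
    · exact (lt_weightedOrder_of_weight_lt m (h s hs)).le
  · refine (weightedOrder w m).le_degree (mem_support_iff.mpr ?_)
    have hne (s : κ) (hs : s ≠ s₀) : a s ≠ a s₀ := fun heq => (h s hs).ne (by rw [heq])
    rw [coeff_sum, Finset.sum_eq_single s₀ (fun s _ hs => by rw [coeff_monomial, if_neg (hne s hs)])
      (by simp)]
    simp

end WeightedOrder

section Twist

variable {ι κ R : Type*} [CommRing R] {ρ : κ → κ} {α β : R}

/-- The substitution `x_(i, s) ↦ α x_(i, s) + β x_(i, ρ s)`, which turns `∑ s, x_(i, s) x_(j, s)`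
into `∑ s, x_(i, s) x_(j, ρ s)` when `α² + β² = 0` and `2αβ = 1`. -/
noncomputable def twist (ρ : κ → κ) (α β : R) :
    MvPolynomial (ι × κ) R →ₐ[R] MvPolynomial (ι × κ) R :=
  aeval fun p => C α * X p + C β * X (p.1, ρ p.2)

lemma twist_X (p : ι × κ) : twist ρ α β (X p) = C α * X p + C β * X (p.1, ρ p.2) :=
  aeval_X _ p

lemma twist_comp_swap (hρ : Function.Involutive ρ) (hsq : α ^ 2 + β ^ 2 = 0)
    (hmul : α * β + β * α = 1) :
    (twist ρ α β).comp (twist ρ β α) = .id R (MvPolynomial (ι × κ) R) := by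
  ext1 p
  have hsq' : C (σ := ι × κ) α ^ 2 + C β ^ 2 = 0 := by simpa using congrArg C hsq
  have hmul' : C (σ := ι × κ) α * C β + C β * C α = 1 := by simpa using congrArg C hmul
  simp only [AlgHom.comp_apply, twist_X, map_add, map_mul, algHom_C, algebraMap_eq, hρ p.2,
    AlgHom.id_apply]
  linear_combination X p * hmul' + X (p.1, ρ p.2) * hsq'

/-- When `α² + β² = 0` and `2αβ = 1`, the substitution `twist ρ α β` is invertible. -/
noncomputable def twistEquiv (hρ : Function.Involutive ρ) (hsq : α ^ 2 + β ^ 2 = 0)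
    (hmul : α * β + β * α = 1) : MvPolynomial (ι × κ) R ≃ₐ[R] MvPolynomial (ι × κ) R :=
  .ofAlgHom (twist ρ α β) (twist ρ β α) (twist_comp_swap hρ hsq hmul)
    (twist_comp_swap hρ (by rw [add_comm, hsq]) (by rw [add_comm, hmul]))

lemma twist_sum_mul [Fintype κ] (hρ : Function.Involutive ρ) (hsq : α ^ 2 + β ^ 2 = 0)
    (hmul : α * β + β * α = 1) (i j : ι) :
    twist ρ α β (∑ s, X (i, s) * X (j, s)) = ∑ s, X (i, s) * X (j, ρ s) := by
  have hsq' : C (σ := ι × κ) α ^ 2 + C β ^ 2 = 0 := by simpa using congrArg C hsq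
  have hmul' : C (σ := ι × κ) α * C β + C β * C α = 1 := by simpa using congrArg C hmul
  have diag : ∑ s, X (i, ρ s) * X (j, ρ s) = ∑ s, (X (i, s) * X (j, s) : MvPolynomial (ι × κ) R) :=
    Equiv.sum_comp (hρ.toPerm ρ) fun s => X (i, s) * X (j, s)
  have cross : ∑ s, X (i, ρ s) * X (j, s) =
      ∑ s, (X (i, s) * X (j, ρ s) : MvPolynomial (ι × κ) R) := by
    simpa [hρ _] using! (Equiv.sum_comp (hρ.toPerm ρ) fun s => X (i, s) * X (j, ρ s))
  simp only [map_sum, map_mul, twist_X]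
  calc _ = C α ^ 2 * ∑ s, X (i, s) * X (j, s) + C β ^ 2 * ∑ s, X (i, ρ s) * X (j, ρ s) +
        C α * C β * (∑ s, X (i, s) * X (j, ρ s) + ∑ s, X (i, ρ s) * X (j, s)) := by
        simp only [Finset.mul_sum, ← Finset.sum_add_distrib]
        exact Finset.sum_congr rfl fun s _ => by ring
    _ = ∑ s, X (i, s) * X (j, ρ s) := by
        rw [diag, cross]
        linear_combination (∑ s, X (i, s) * X (j, s)) * hsq' + (∑ s, X (i, s) * X (j, ρ s)) * hmul'

end Twist

section Reflection

/-- The involution of `Fin m` that reflects `{0, …, N}` and fixes all other indices, used as the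
involution `ρ` in `twist`. -/
def reflect {m N : ℕ} (hN : N < m) (s : Fin m) : Fin m :=
  if s ≤ N then ⟨N - s, by omega⟩ else s

lemma reflect_involutive {m N : ℕ} (hN : N < m) : Function.Involutive (reflect hN) := by
  intro s
  ext
  unfold reflect
  grind

lemma sq_sub_sq_add_sq_sub_sq_lt {a b c M : ℕ} (hab : a + b = 2 * c) (hne : a ≠ b)
    (ha : a ≤ M) (hb : b ≤ M) :
    (M ^ 2 - a ^ 2) + (M ^ 2 - b ^ 2) < (M ^ 2 - c ^ 2) + (M ^ 2 - c ^ 2) := by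
  have hc : c ≤ M := by omega
  have := Nat.pow_le_pow_left ha 2
  have := Nat.pow_le_pow_left hb 2
  have := Nat.pow_le_pow_left hc 2
  zify [*] at *
  nlinarith [sq_pos_of_ne_zero (sub_ne_zero.mpr hne)]

/-- Under this weight, among the terms `x_(i, s) * x_(j, reflect s)` with `i ≤ j` the one with
`s = k - 1 + (j - i)` is heaviest: `2 i + s` and `2 j + reflect s` have a sum independent of `s`,
so the sum of their squares is least when they agree. -/
def reflectWeight (k m : ℕ) (p : Fin k × Fin m) : ℕ :=
  if p.2 ≤ 2 * (k - 1) then (4 * k) ^ 2 - (2 * p.1 + p.2) ^ 2 else 0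

variable {k m : ℕ} (hkm : 2 * (k - 1) < m) (i j : Fin k)

/-- The exponent of `x_(i, s) * x_(j, reflect s)`, with the reflection of `{0, …, 2 * (k - 1)}`. -/
noncomputable def pairExponent (s : Fin m) : Fin k × Fin m →₀ ℕ :=
  Finsupp.single (i, s) 1 + Finsupp.single (j, reflect hkm s) 1

variable {i j}

lemma weight_pairExponent_lt {s₀ s : Fin m} (hs₀ : (s₀ : ℕ) + i = k - 1 + j) (hs : s ≠ s₀) :
    Finsupp.weight (reflectWeight k m) (pairExponent hkm i j s) <
      Finsupp.weight (reflectWeight k m) (pairExponent hkm i j s₀) := by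
  have := i.isLt
  have := j.isLt
  have weight_of_le {s : Fin m} (h : (s : ℕ) ≤ 2 * (k - 1)) :
      Finsupp.weight (reflectWeight k m) (pairExponent hkm i j s) =
        ((4 * k) ^ 2 - (2 * i + s) ^ 2) + ((4 * k) ^ 2 - (2 * j + (2 * (k - 1) - s)) ^ 2) := by
    simp [pairExponent, Finsupp.weight_single, reflectWeight, reflect, h]
  rw [weight_of_le (s := s₀) (by omega), show 2 * (i : ℕ) + s₀ = i + j + (k - 1) by omega,
    show 2 * (j : ℕ) + (2 * (k - 1) - s₀) = i + j + (k - 1) by omega]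
  by_cases h : (s : ℕ) ≤ 2 * (k - 1)
  · rw [weight_of_le h]
    have := Fin.val_ne_of_ne hs
    exact sq_sub_sq_add_sq_sub_sq_lt (by omega) (by omega) (by omega) (by omega)
  · have : (i + j + (k - 1)) ^ 2 < (4 * k) ^ 2 := Nat.pow_lt_pow_left (by omega) two_ne_zero
    simpa [pairExponent, Finsupp.weight_single, reflectWeight, reflect, h]

lemma disjoint_pairExponent {i' j' : Fin k} {s s' : Fin m} (hij : i ≤ j) (hij' : i' ≤ j')
    (hs : (s : ℕ) + i = k - 1 + j) (hs' : (s' : ℕ) + i' = k - 1 + j')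
    (hne : (i, j) ≠ (i', j')) :
    Disjoint (pairExponent hkm i j s) (pairExponent hkm i' j' s') := by
  have := i.isLt
  have := i'.isLt
  have := j.isLt
  have := j'.isLt
  rw [Fin.le_def] at hij hij'
  rw [Ne, Prod.mk_inj, Fin.ext_iff, Fin.ext_iff] at hne
  have reflect_val : (reflect hkm s : ℕ) = 2 * (k - 1) - s := by
    rw [reflect, if_pos (by omega)]
  have reflect_val' : (reflect hkm s' : ℕ) = 2 * (k - 1) - s' := by
    rw [reflect, if_pos (by omega)]
  rw [disjoint_iff]
  -- `t - (k - 1)` is `j - i` if `l = i` and `i - j` if `l = j`, so `(l, t)` determines `(i, j)`.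
  ext ⟨l, t⟩
  simp only [pairExponent, Finsupp.inf_apply, Finsupp.add_apply, Finsupp.single_apply,
    Prod.mk_inj, Fin.ext_iff, reflect_val, reflect_val', bot_eq_zero, Finsupp.zero_apply]
  split_ifs <;> first | rfl | omega

theorem isQuasiRegular_sum_X_mul_X_reflect (K : Type*) [Field K] :
    IsQuasiRegular fun p : {p : Fin k × Fin k // p.1 ≤ p.2} =>
      ∑ s, (X (p.1.1, s) * X (p.1.2, reflect hkm s) : MvPolynomial (Fin k × Fin m) K) := by
  obtain ⟨m₀⟩ := nonempty_monomialOrder (Fin k × Fin m)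
  have exists_peak (p : {p : Fin k × Fin k // p.1 ≤ p.2}) :
      ∃ s : Fin m, (s : ℕ) + p.1.1 = k - 1 + p.1.2 := by
    have := Fin.le_def.mp p.2
    have := p.1.2.isLt
    exact ⟨⟨k - 1 + p.1.2 - p.1.1, by omega⟩, by dsimp only; omega⟩
  choose peak hpeak using exists_peak
  have degree_eq (p : {p : Fin k × Fin k // p.1 ≤ p.2}) :
      (weightedOrder (reflectWeight k m) m₀).degree
        (∑ s, (X (p.1.1, s) * X (p.1.2, reflect hkm s) : MvPolynomial (Fin k × Fin m) K)) =
      pairExponent hkm p.1.1 p.1.2 (peak p) := by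
    simp only [X, monomial_mul, mul_one]
    exact degree_sum_monomial_of_weight_lt fun s hs => weight_pairExponent_lt hkm (hpeak p) hs
  refine .of_disjoint_degree (m := weightedOrder (reflectWeight k m) m₀) (fun p => ?_)
    fun p p' hne => ?_
  · rw [degree_eq, pairExponent]
    simp
  · simp only [degree_eq]
    exact disjoint_pairExponent hkm p.2 p'.2 (hpeak p) (hpeak p') (Subtype.coe_ne_coe.mpr hne)

end Reflection

theorem isQuasiRegular_r2 {k m : ℕ} (hkm : 2 * (k - 1) < m) :
    IsQuasiRegular fun p : {p : Fin k × Fin k // p.1 ≤ p.2} => r2 k m p.1.1 p.1.2 := by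
  have hsq : ((1 + Complex.I) / 2) ^ 2 + ((1 - Complex.I) / 2) ^ 2 = 0 := by
    linear_combination Complex.I_sq / 2
  have hmul : (1 + Complex.I) / 2 * ((1 - Complex.I) / 2) +
      (1 - Complex.I) / 2 * ((1 + Complex.I) / 2) = 1 := by
    linear_combination -Complex.I_sq / 2
  refine .of_map (twistEquiv (reflect_involutive hkm) hsq hmul).toRingEquiv ?_
  convert isQuasiRegular_sum_X_mul_X_reflect hkm ℂ using 2 with p
  exact twist_sum_mul (reflect_involutive hkm) hsq hmul p.1.1 p.1.2

section FischerInner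

variable {σ 𝕜 : Type*} [RCLike 𝕜]

/-- The multi-index factorial `a! = ∏ s, (a s)!`, the squared Fischer norm of `x ^ a`. -/
def multiFactorial (a : σ →₀ ℕ) : ℕ :=
  a.prod fun _ n => n.factorial

lemma multiFactorial_pos (a : σ →₀ ℕ) : 0 < multiFactorial a :=
  Finset.prod_pos fun _ _ => Nat.factorial_pos _

lemma multiFactorial_single_add (s : σ) (a : σ →₀ ℕ) :
    multiFactorial (Finsupp.single s 1 + a) = (a s + 1) * multiFactorial a := by
  classical
  have split (b : σ →₀ ℕ) (hb : a.erase s = b.erase s) :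
      multiFactorial b = (b s).factorial * multiFactorial (a.erase s) := by
    rw [hb]
    exact (Finsupp.mul_prod_erase' b s (fun _ n => n.factorial) fun _ => rfl).symm
  rw [split (Finsupp.single s 1 + a) (by simp), split a rfl, ← mul_assoc, Finsupp.add_apply,
    Finsupp.single_eq_same, add_comm 1, Nat.factorial_succ]

/-- The Fischer inner product `⟪P, Q⟫ = ∑ a, a! * conj (coeff a P) * coeff a Q`, for which
multiplication by a variable is adjoint to the corresponding partial derivative. -/
noncomputable def fischerInner (P Q : MvPolynomial σ 𝕜) : 𝕜 :=
  ∑ a ∈ P.support, multiFactorial a * (conj (coeff a P) * coeff a Q)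

lemma fischerInner_eq_sum_of_subset {P : MvPolynomial σ 𝕜} (Q : MvPolynomial σ 𝕜)
    {S : Finset (σ →₀ ℕ)} (h : P.support ⊆ S) :
    fischerInner P Q = ∑ a ∈ S, multiFactorial a * (conj (coeff a P) * coeff a Q) :=
  Finset.sum_subset h fun a _ ha => by simp [notMem_support_iff.mp ha]

lemma conj_fischerInner (P Q : MvPolynomial σ 𝕜) : conj (fischerInner Q P) = fischerInner P Q := by
  classical
  rw [fischerInner_eq_sum_of_subset Q (S := P.support ∪ Q.support) Finset.subset_union_left,
    fischerInner_eq_sum_of_subset P (S := P.support ∪ Q.support) Finset.subset_union_right, map_sum]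
  exact Finset.sum_congr rfl fun a _ => by simp [mul_comm]

lemma fischerInner_self (P : MvPolynomial σ 𝕜) :
    fischerInner P P = ((∑ a ∈ P.support, multiFactorial a * ‖coeff a P‖ ^ 2 : ℝ) : 𝕜) := by
  simp only [fischerInner, RCLike.conj_mul]
  push_cast
  rfl

/-- The Fischer inner product as an inner product space structure on polynomials. -/
@[reducible]
noncomputable def fischerCore : InnerProductSpace.Core 𝕜 (MvPolynomial σ 𝕜) where
  inner := fischerInner
  conj_inner_symm := conj_fischerInner
  re_inner_nonneg P := by
    rw [fischerInner_self, RCLike.ofReal_re]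
    positivity
  add_left P P' Q := by
    classical
    rw [fischerInner_eq_sum_of_subset Q (support_add (p := P) (q := P')),
      fischerInner_eq_sum_of_subset Q (Finset.subset_union_left (s₁ := P.support)),
      fischerInner_eq_sum_of_subset Q (Finset.subset_union_right (s₂ := P'.support)),
      ← Finset.sum_add_distrib]
    exact Finset.sum_congr rfl fun a _ => by simp only [coeff_add, map_add]; ring
  smul_left P Q c := by
    rw [fischerInner_eq_sum_of_subset Q (support_smul (a := c) (f := P)), fischerInner,
      Finset.mul_sum]
    exact Finset.sum_congr rfl fun a _ => by simp only [coeff_smul, smul_eq_mul, map_mul]; ring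
  definite P h := by
    rw [fischerInner_self, RCLike.ofReal_eq_zero,
      Finset.sum_eq_zero_iff_of_nonneg fun a _ => by positivity] at h
    by_contra hP
    obtain ⟨a, ha⟩ := support_nonempty.mpr hP
    have hfact : (multiFactorial a : ℝ) ≠ 0 := by exact_mod_cast (multiFactorial_pos a).ne'
    simpa [hfact, mem_support_iff.mp ha] using h a ha

noncomputable local instance : NormedAddCommGroup (MvPolynomial σ 𝕜) :=
  (fischerCore (𝕜 := 𝕜)).toNormedAddCommGroup

noncomputable local instance : InnerProductSpace 𝕜 (MvPolynomial σ 𝕜) :=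
  InnerProductSpace.ofCore fischerCore.toCore

lemma inner_eq_fischerInner (P Q : MvPolynomial σ 𝕜) : ⟪P, Q⟫_𝕜 = fischerInner P Q := rfl

lemma inner_X_mul (s : σ) (P Q : MvPolynomial σ 𝕜) : ⟪X s * P, Q⟫_𝕜 = ⟪P, pderiv s Q⟫_𝕜 := by
  simp only [inner_eq_fischerInner, fischerInner, support_X_mul, Finset.sum_map,
    addLeftEmbedding_apply, coeff_X_mul, coeff_pderiv, multiFactorial_single_add]
  refine Finset.sum_congr rfl fun a _ => ?_
  rw [add_comm a]
  push_cast
  ring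

lemma inner_eq_zero_of_isHomogeneous {P Q : MvPolynomial σ 𝕜} {d e : ℕ} (hP : P.IsHomogeneous d)
    (hQ : Q.IsHomogeneous e) (hde : d ≠ e) : ⟪P, Q⟫_𝕜 = 0 := by
  refine Finset.sum_eq_zero fun a ha => ?_
  have had : a.degree = d := by
    by_contra hne
    exact mem_support_iff.mp ha (hP.coeff_eq_zero hne)
  rw [hQ.coeff_eq_zero (had.trans_ne hde), mul_zero, mul_zero]

section Harmonic

variable {ι : Type*}

/-- The harmonic polynomials of a family `q`: the orthogonal complement, for the Fischer inner
product, of the ideal generated by `q`. -/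
noncomputable def harmonics (q : ι → MvPolynomial σ 𝕜) : Submodule 𝕜 (MvPolynomial σ 𝕜) :=
  ((Ideal.span (Set.range q)).restrictScalars 𝕜)ᗮ

lemma mem_harmonics {q : ι → MvPolynomial σ 𝕜} {H : MvPolynomial σ 𝕜} :
    H ∈ harmonics q ↔ ∀ i P, ⟪q i * P, H⟫_𝕜 = 0 := by
  rw [harmonics, Submodule.mem_orthogonal]
  refine ⟨fun h i P => h _ (Ideal.mul_mem_right _ _ (Ideal.subset_span ⟨i, rfl⟩)),
    fun h F hF => ?_⟩
  obtain ⟨c, rfl⟩ := Finsupp.mem_ideal_span_range_iff_exists_finsupp.mp hF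
  rw [Finsupp.sum, sum_inner]
  exact Finset.sum_eq_zero fun i _ => by rw [mul_comm, h]

lemma eq_zero_of_mem_span_of_mem_harmonics {q : ι → MvPolynomial σ 𝕜} {H : MvPolynomial σ 𝕜}
    (hI : H ∈ Ideal.span (Set.range q)) (hH : H ∈ harmonics q) : H = 0 :=
  inner_self_eq_zero.mp (hH H hI)

/-- The polynomials `∑ n, q ^ n * H n` with all `H n` harmonic. -/
noncomputable def harmonicExpansions (q : ι → MvPolynomial σ 𝕜) :
    Submodule 𝕜 (MvPolynomial σ 𝕜) :=
  (coeffsIn ι (harmonics q)).map ((aeval q).toLinearMap.restrictScalars 𝕜)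

lemma mem_harmonicExpansions {q : ι → MvPolynomial σ 𝕜} {P : MvPolynomial σ 𝕜} :
    P ∈ harmonicExpansions q ↔ ∃ F ∈ coeffsIn ι (harmonics q), eval q F = P :=
  .rfl

lemma harmonics_le_harmonicExpansions (q : ι → MvPolynomial σ 𝕜) :
    harmonics q ≤ harmonicExpansions q := fun H hH =>
  mem_harmonicExpansions.mpr ⟨C H, C_mem_coeffsIn.mpr hH, eval_C H⟩

lemma mul_mem_harmonicExpansions {q : ι → MvPolynomial σ 𝕜} {P : MvPolynomial σ 𝕜} (i : ι)
    (hP : P ∈ harmonicExpansions q) : q i * P ∈ harmonicExpansions q := by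
  obtain ⟨F, hF, rfl⟩ := mem_harmonicExpansions.mp hP
  exact mem_harmonicExpansions.mpr ⟨X i * F, X_mul_mem_coeffsIn.mpr hF, by simp⟩

/-- A polynomial of degree `d` that is orthogonal to the expansions of degree `d` is orthogonal to
the ideal, hence harmonic, hence an expansion of degree `d`. -/
lemma homogeneousSubmodule_le_harmonicExpansions [Finite σ] {q : ι → MvPolynomial σ 𝕜}
    {e : ι → ℕ} (hq : ∀ i, (q i).IsHomogeneous (e i)) (he : ∀ i, e i ≠ 0) (d : ℕ) :
    homogeneousSubmodule σ 𝕜 d ≤ harmonicExpansions q := by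
  induction d using Nat.strong_induction_on with | _ d ih => ?_
  set V := homogeneousSubmodule σ 𝕜 d
  set T := harmonicExpansions q
  have : Module.Finite 𝕜 V := Module.Finite.iff_fg.mpr (homogeneousSubmodule_fg σ 𝕜 d)
  have : Module.Finite 𝕜 (T ⊓ V : Submodule 𝕜 (MvPolynomial σ 𝕜)) :=
    Module.Finite.of_injective _ (Submodule.inclusion_injective inf_le_right)
  have harmonic_of_orthogonal : (T ⊓ V)ᗮ ⊓ V ≤ harmonics q := by
    rintro z ⟨hz, hzd⟩
    refine mem_harmonics.mpr fun i P => ?_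
    rw [← sum_homogeneousComponent P, Finset.mul_sum, sum_inner]
    refine Finset.sum_eq_zero fun n _ => ?_
    have hqn := (hq i).mul (homogeneousComponent_isHomogeneous n P)
    by_cases hn : e i + n = d
    · have hnd : n < d := by have := he i; omega
      rw [hn] at hqn
      exact hz _ ⟨mul_mem_harmonicExpansions i
        (ih n hnd (homogeneousComponent_isHomogeneous n P)), hqn⟩
    · exact inner_eq_zero_of_isHomogeneous hqn hzd hn
  have orthogonal_eq_bot : (T ⊓ V)ᗮ ⊓ V = ⊥ := (Submodule.eq_bot_iff _).mpr fun z hz =>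
    inner_self_eq_zero.mp <| hz.1 z
      ⟨harmonics_le_harmonicExpansions q (harmonic_of_orthogonal hz), hz.2⟩
  have := Submodule.sup_orthogonal_inf_of_hasOrthogonalProjection (inf_le_right : T ⊓ V ≤ V)
  rw [orthogonal_eq_bot, sup_bot_eq] at this
  exact inf_eq_right.mp this

lemma harmonicExpansions_eq_top [Finite σ] {q : ι → MvPolynomial σ 𝕜} {e : ι → ℕ}
    (hq : ∀ i, (q i).IsHomogeneous (e i)) (he : ∀ i, e i ≠ 0) : harmonicExpansions q = ⊤ := by
  refine eq_top_iff.mpr fun P _ => ?_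
  rw [← sum_homogeneousComponent P]
  exact sum_mem fun d _ => homogeneousSubmodule_le_harmonicExpansions hq he d
    (homogeneousComponent_isHomogeneous d P)

lemma IsQuasiRegular.eq_of_eval_eq {q : ι → MvPolynomial σ 𝕜} (hreg : IsQuasiRegular q)
    {F F' : MvPolynomial ι (MvPolynomial σ 𝕜)} (hF : F ∈ coeffsIn ι (harmonics q))
    (hF' : F' ∈ coeffsIn ι (harmonics q)) (h : eval q F = eval q F') : F = F' := by
  by_contra hne
  obtain ⟨n, hn, hmin⟩ := (F - F').support.exists_min_image (·.degree)
    (support_nonempty.mpr (sub_ne_zero.mpr hne))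
  have hI := hreg (F - F') (by rw [map_sub, h, sub_self]) n hmin
  exact mem_support_iff.mp hn
    (eq_zero_of_mem_span_of_mem_harmonics hI (mem_coeffsIn.mp (sub_mem hF hF') n))

theorem existsUnique_harmonic_expansion [Finite σ] [Fintype ι] {q : ι → MvPolynomial σ 𝕜}
    {e : ι → ℕ} (hq : ∀ i, (q i).IsHomogeneous (e i)) (he : ∀ i, e i ≠ 0)
    (hreg : IsQuasiRegular q) (P : MvPolynomial σ 𝕜) :
    ∃! H : (ι → ℕ) →₀ MvPolynomial σ 𝕜,
      (∀ n, H n ∈ harmonics q) ∧ P = H.sum fun n Hn => (∏ i, q i ^ n i) * Hn := by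
  let toFamily : MvPolynomial ι (MvPolynomial σ 𝕜) ≃ ((ι → ℕ) →₀ MvPolynomial σ 𝕜) :=
    AddMonoidAlgebra.coeffEquiv.trans (Finsupp.domCongr Finsupp.equivFunOnFinite).toEquiv
  have mem_iff (F) : (∀ n, toFamily F n ∈ harmonics q) ↔ F ∈ coeffsIn ι (harmonics q) := by
    rw [mem_coeffsIn]
    exact Finsupp.equivFunOnFinite.symm.forall_congr_right
      (q := fun n => coeff n F ∈ harmonics q)
  have sum_eq (F) : (toFamily F).sum (fun n Hn => (∏ i, q i ^ n i) * Hn) = eval q F := by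
    rw [eval_eq']
    exact (Finsupp.sum_equivMapDomain _ _ _).trans (Finset.sum_congr rfl fun n _ => mul_comm _ _)
  obtain ⟨F, hF, hFP⟩ := mem_harmonicExpansions.mp
    (harmonicExpansions_eq_top hq he ▸ Submodule.mem_top : P ∈ harmonicExpansions q)
  refine ⟨toFamily F, ⟨(mem_iff F).mpr hF, by rw [sum_eq, hFP]⟩, ?_⟩
  rw [toFamily.surjective.forall]
  rintro F' ⟨hF', hF'P⟩
  rw [sum_eq] at hF'P
  rw [hreg.eq_of_eval_eq hF ((mem_iff F').mp hF') (hFP.trans hF'P)]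

end Harmonic

section SphericalHarmonic

variable {k m : ℕ}

lemma isHomogeneous_r2 (i j : Fin k) : (r2 k m i j).IsHomogeneous 2 :=
  .sum _ _ _ fun s _ => (isHomogeneous_X ℂ (i, s)).mul (isHomogeneous_X ℂ (j, s))

lemma inner_r2_mul (i j : Fin k) (P H : MvPolynomial (Fin k × Fin m) ℂ) :
    ⟪r2 k m i j * P, H⟫_ℂ = ⟪P, mixedLap k m i j H⟫_ℂ := by
  rw [r2, mixedLap, Finset.sum_mul, sum_inner, inner_sum]
  exact Finset.sum_congr rfl fun s _ => by
    rw [mul_right_comm, mul_comm, inner_X_mul, inner_X_mul]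

lemma mem_harmonics_r2 {H : MvPolynomial (Fin k × Fin m) ℂ} :
    H ∈ harmonics (fun p : {p : Fin k × Fin k // p.1 ≤ p.2} => r2 k m p.1.1 p.1.2) ↔
      IsSphericalHarmonic k m H := by
  simp only [mem_harmonics, inner_r2_mul, IsSphericalHarmonic, Subtype.forall, Prod.forall]
  refine forall₃_congr fun i j _ => ⟨fun h => inner_self_eq_zero.mp (h _), fun h P => ?_⟩
  rw [h, inner_zero_right]

end SphericalHarmonic

end FischerInner

end FischerDecomposition

/-- **Theorem A** (harmonic Fischer decomposition in the semistable range). If `m ≥ 2k - 1`,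
then every polynomial `P` has a unique representation `P = Σ_n r^{2n} H_n` with each `H_n`
a spherical harmonic (only finitely many nonzero). -/
theorem thmA (k m : ℕ) (hk : 0 < k) (hm : 0 < m) (h : m ≥ 2 * k - 1)
    (P : MvPolynomial (Fin k × Fin m) ℂ) :
    ∃! H : ({p : Fin k × Fin k // p.1 ≤ p.2} → ℕ) →₀ MvPolynomial (Fin k × Fin m) ℂ,
      (∀ n, IsSphericalHarmonic k m (H n)) ∧
        P = H.sum fun n Hn => r2pow k m n * Hn := by
  have expansion := FischerDecomposition.existsUnique_harmonic_expansion
    (q := fun p : {p : Fin k × Fin k // p.1 ≤ p.2} => r2 k m p.1.1 p.1.2)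
    (fun p => FischerDecomposition.isHomogeneous_r2 p.1.1 p.1.2) (fun _ => two_ne_zero)
    (FischerDecomposition.isQuasiRegular_r2 (by omega)) P
  simpa only [FischerDecomposition.mem_harmonics_r2, r2pow] using expansion
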